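/- arXiv:1011.3696 — 4 statements merged into one kernel-verified Lean document; each statement's English description precedes it below -/
import Mathlib

section
/- Let σ ⊆ ℝ^d be a convex cone with nonempty interior and let e_1,…,e_n and f_1,…,f_n be two families of vectors in ℝ^d. If for every j ∈ {1,…,n} and every ν ∈ σ the minimum over all j-element subsets S ⊆ {1,…,n} of Σ_{i∈S}⟨ν,e_i⟩ equals the minimum over all j-element subsets S ⊆ {1,…,n} of Σ_{i∈S}⟨ν,f_i⟩, then there is a permutation π of {1,…,n} with f_i = e_{π(i)} for all i. (The support functions — equivalently, the Newton polyhedra — of the ideals of sums of combinations determine the minimal system of generators of the semigroup.) -/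
/-- Support function of the Newton polyhedron of the `j`-th ideal of sums of
combinations. -/
noncomputable def ordC {d n : ℕ} (e : Fin n → Fin d → ℝ) (j : ℕ) (ν : Fin d → ℝ) : ℝ :=
  sInf {x : ℝ | ∃ S : Finset (Fin n), S.card = j ∧ x = ∑ i ∈ S, ∑ k, ν k * e i k}

theorem Fin.val_le_val_of_strictMono {j n : ℕ} {φ : Fin j → Fin n} (hφ : StrictMono φ)
    (k : Fin j) : (k : ℕ) ≤ φ k := by
  obtain ⟨k, hk⟩ := k
  induction k with
  | zero => exact Nat.zero_le _
  | succ k ih =>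
    have hlt : φ ⟨k, by omega⟩ < φ ⟨k + 1, hk⟩ := hφ (Fin.mk_lt_mk.2 (Nat.lt_succ_self k))
    have hle := ih (by omega)
    have hlt' := Fin.lt_def.1 hlt
    simp only at hle ⊢
    omega

/-- Among `j`-element index sets, an initial segment minimises the sum of a monotone family. -/
theorem Monotone.sum_castLE_le_sum {j n : ℕ} (hj : j ≤ n) {g : Fin n → ℝ} (hg : Monotone g)
    (S : Finset (Fin n)) (hS : S.card = j) :
    ∑ k : Fin j, g (Fin.castLE hj k) ≤ ∑ i ∈ S, g i := by
  have hsum : ∑ i ∈ S, g i = ∑ k : Fin j, g (S.orderEmbOfFin hS k) := by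
    rw [← Finset.sum_coe_sort S, ← (S.orderIsoOfFin hS).toEquiv.sum_comp]
    rfl
  rw [hsum]
  exact Finset.sum_le_sum fun k _ =>
    hg (Fin.le_def.2 (Fin.val_le_val_of_strictMono (S.orderEmbOfFin hS).strictMono k))

theorem sInf_sum_card_eq_sum_castLE {j n : ℕ} (hj : j ≤ n) (a : Fin n → ℝ)
    (s : Equiv.Perm (Fin n)) (hs : Monotone (a ∘ s)) :
    sInf {x : ℝ | ∃ S : Finset (Fin n), S.card = j ∧ x = ∑ i ∈ S, a i} =
      ∑ k : Fin j, a (s (Fin.castLE hj k)) := by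
  refine IsLeast.csInf_eq ⟨?_, ?_⟩
  · refine ⟨Finset.univ.map ((Fin.castLEEmb hj).trans s.toEmbedding), by simp, ?_⟩
    simp
  · rintro x ⟨S, hS, rfl⟩
    have hmin := hs.sum_castLE_le_sum hj (S.map s.symm.toEmbedding) (by simpa using hS)
    simpa using hmin

/-- The minimal sums over `j`-element index sets determine a finite real family up to order. -/
theorem exists_perm_of_sInf_sum_card_eq {n : ℕ} (a b : Fin n → ℝ)
    (h : ∀ j : ℕ, 1 ≤ j → j ≤ n →
      sInf {x : ℝ | ∃ S : Finset (Fin n), S.card = j ∧ x = ∑ i ∈ S, a i} =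
      sInf {x : ℝ | ∃ S : Finset (Fin n), S.card = j ∧ x = ∑ i ∈ S, b i}) :
    ∃ π : Equiv.Perm (Fin n), ∀ i, b i = a (π i) := by
  set s := Tuple.sort a
  set t := Tuple.sort b
  have hsum (j : ℕ) (hj : j ≤ n) :
      ∑ k : Fin j, a (s (Fin.castLE hj k)) = ∑ k : Fin j, b (t (Fin.castLE hj k)) := by
    rcases Nat.eq_zero_or_pos j with rfl | hpos
    · simp
    · rw [← sInf_sum_card_eq_sum_castLE hj a s (Tuple.monotone_sort a),
        ← sInf_sum_card_eq_sum_castLE hj b t (Tuple.monotone_sort b), h j hpos hj]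
  have hsorted (k : Fin n) : a (s k) = b (t k) := by
    have hsucc := hsum (k + 1) k.isLt
    rw [Fin.sum_univ_castSucc, Fin.sum_univ_castSucc] at hsucc
    exact add_left_cancel ((congrArg (· + _) (hsum k k.isLt.le).symm).trans hsucc)
  exact ⟨t.symm.trans s, fun i => by simp [hsorted]⟩

/-- Finitely many subspaces covering a set with nonempty interior include the whole space. -/
theorem Submodule.exists_eq_top_of_subset_iUnion {ι : Type*} [Finite ι] {d : ℕ}
    {σ : Set (Fin d → ℝ)} (hσ : (interior σ).Nonempty) (W : ι → Submodule ℝ (Fin d → ℝ))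
    (hW : σ ⊆ ⋃ i, (W i : Set (Fin d → ℝ))) : ∃ i, W i = ⊤ := by
  by_contra! hne
  have hnull : MeasureTheory.volume (⋃ i, (W i : Set (Fin d → ℝ))) = 0 :=
    MeasureTheory.measure_iUnion_null fun i =>
      MeasureTheory.Measure.addHaar_submodule _ (W i) (hne i)
  exact (isOpen_interior.measure_pos MeasureTheory.volume hσ).ne'
    (MeasureTheory.measure_mono_null (interior_subset.trans hW) hnull)

theorem stmt2 (d n : ℕ) (hd : 1 ≤ d) (hn : 1 ≤ n)
    (σ : Set (Fin d → ℝ)) (hconv : Convex ℝ σ)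
    (hcone : ∀ x ∈ σ, ∀ c : ℝ, 0 ≤ c → c • x ∈ σ)
    (hint : (interior σ).Nonempty)
    (e f : Fin n → Fin d → ℝ)
    (h : ∀ j : ℕ, 1 ≤ j → j ≤ n → ∀ ν ∈ σ, ordC e j ν = ordC f j ν) :
    ∃ π : Equiv.Perm (Fin n), ∀ i, f i = e (π i) := by
  let W (π : Equiv.Perm (Fin n)) : Submodule ℝ (Fin d → ℝ) :=
    ⨅ i, LinearMap.ker (dotProductBilin ℝ ℝ (f i - e (π i)))
  have hmem (π : Equiv.Perm (Fin n)) (ν : Fin d → ℝ) :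
      ν ∈ W π ↔ ∀ i, (f i - e (π i)) ⬝ᵥ ν = 0 := by
    simp [W]
  obtain ⟨π, hπ⟩ := Submodule.exists_eq_top_of_subset_iUnion hint W fun ν hν => by
    obtain ⟨π, hπ⟩ := exists_perm_of_sInf_sum_card_eq (fun i => ∑ k, ν k * e i k)
      (fun i => ∑ k, ν k * f i k) fun j hj hjn => h j hj hjn ν hν
    refine Set.mem_iUnion.2 ⟨π, (hmem π ν).2 fun i => ?_⟩
    rw [dotProduct_comm, dotProduct_sub, sub_eq_zero]
    exact hπ i
  refine ⟨π, fun i => sub_eq_zero.1 (dotProduct_self_eq_zero.1 ?_)⟩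
  exact (hmem π _).1 (hπ ▸ Submodule.mem_top) i
end

section
/- Let M be a finitely generated free abelian group, let Λ ⊆ M be a submonoid which generates M as a group, and let k be a field of characteristic zero. The map sending a pair (ν, ω) — where ν : M → ℤ is a group homomorphism with ν(u) > 0 for every u ∈ Λ \ {0}, and ω : M → (k[[t]])ˣ is a group homomorphism into the group of units of the formal power series ring k[[t]] — to the monoid homomorphism h : (Λ,+) → (k[[t]], ·) defined by h(u) = t^{ν(u)} ω(u), is a bijection onto the set of monoid homomorphisms h : (Λ,+) → (k[[t]], ·) such that h(u) ≠ 0 for every u ∈ Λ and the t-order of h(u) is strictly positive for every u ∈ Λ \ {0}. -/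
/-- Every element of a group generated by a submonoid `Λ` is a difference of elements of `Λ`. -/
theorem AddSubmonoid.exists_eq_sub_of_closure_eq_top {M : Type*} [AddCommGroup M]
    {Λ : AddSubmonoid M} (hΛ : AddSubgroup.closure (Λ : Set M) = ⊤) (m : M) :
    ∃ a b : Λ, m = a - b := by
  have hm : m ∈ AddSubgroup.closure (Λ : Set M) := hΛ ▸ AddSubgroup.mem_top m
  induction hm using AddSubgroup.closure_induction with
  | mem x hx => exact ⟨⟨x, hx⟩, 0, by simp⟩
  | zero => exact ⟨0, 0, by simp⟩
  | add x y _ _ hx hy =>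
    obtain ⟨a, b, rfl⟩ := hx
    obtain ⟨c, d, rfl⟩ := hy
    exact ⟨a + c, b + d, by push_cast; abel⟩
  | neg x _ hx =>
    obtain ⟨a, b, rfl⟩ := hx
    exact ⟨b, a, by abel⟩

/-- A homomorphism from a generating submonoid to a commutative group extends to the group. -/
theorem AddSubmonoid.exists_extend_of_closure_eq_top {M G : Type*} [AddCommGroup M]
    [AddCommGroup G] {Λ : AddSubmonoid M} (hΛ : AddSubgroup.closure (Λ : Set M) = ⊤)
    (g : Λ → G) (hg : ∀ u v, g (u + v) = g u + g v) :
    ∃ f : M →+ G, ∀ u : Λ, f u = g u := by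
  choose a b hab using exists_eq_sub_of_closure_eq_top hΛ
  have key : ∀ (m : M) (c d : Λ), m = c - d → g (a m) - g (b m) = g c - g d := by
    intro m c d hm
    have hsum : a m + d = c + b m := by
      apply Subtype.ext
      push_cast
      rw [← sub_eq_sub_iff_add_eq_add, ← hab, hm]
    rw [sub_eq_sub_iff_add_eq_add, ← hg, ← hg, hsum]
  refine ⟨AddMonoidHom.mk' (fun m => g (a m) - g (b m)) fun x y => ?_, fun u => ?_⟩
  · rw [key (x + y) (a x + a y) (b x + b y), hg, hg]
    · abel
    · push_cast
      rw [add_sub_add_comm, ← hab, ← hab]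
  · change g (a u) - g (b u) = g u
    rw [key u (u + u) u (by simp), hg, add_sub_cancel_right]

theorem PowerSeries.order_X_pow_mul_unit {k : Type*} [Field k] (n : ℕ) (w : (PowerSeries k)ˣ) :
    ((X : PowerSeries k) ^ n * (w : PowerSeries k)).order = n := by
  rw [order_mul, order_X_pow, order_zero_of_unit w.isUnit, add_zero]

theorem PowerSeries.X_pow_mul_unit_inj {k : Type*} [Field k] {n m : ℕ}
    {w v : (PowerSeries k)ˣ}
    (h : (X : PowerSeries k) ^ n * (w : PowerSeries k) = X ^ m * (v : PowerSeries k)) :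
    n = m ∧ w = v := by
  have hnm : n = m := by
    have := congrArg order h
    rw [order_X_pow_mul_unit, order_X_pow_mul_unit] at this
    exact_mod_cast this
  subst hnm
  exact ⟨rfl, Units.ext (mul_left_cancel₀ (pow_ne_zero n X_ne_zero) h)⟩

theorem PowerSeries.exists_eq_X_pow_mul_unit {k : Type*} [Field k] {f : PowerSeries k}
    (hf : f ≠ 0) :
    ∃ (n : ℕ) (w : (PowerSeries k)ˣ), f = X ^ n * (w : PowerSeries k) :=
  ⟨f.order.toNat, Unit_of_divided_by_X_pow_order f, by
    rw [Unit_of_divided_by_X_pow_order_nonzero hf, X_pow_order_mul_divXPowOrder]⟩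


/-- Arcs on a toric variety with generic point in the torus: a monoid homomorphism
`h : (Λ,+) → (k[[t]],·)` with nonzero values and positive `t`-order on `Λ \ {0}`
corresponds bijectively to a pair `(ν, ω)` where `ν : M → ℤ` is a group homomorphism
positive on `Λ \ {0}` and `ω : M → (k[[t]])ˣ` is a group homomorphism, via
`h(u) = t^{ν(u)} ω(u)`. -/
theorem stmt3 (M : Type*) [AddCommGroup M] [Module.Free ℤ M] [Module.Finite ℤ M]
    (Λ : AddSubmonoid M) (hΛ : AddSubgroup.closure (Λ : Set M) = ⊤)
    (k : Type*) [Field k] [CharZero k]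
    (h : Λ → PowerSeries k) :
    ((∀ u v : Λ, h (u + v) = h u * h v) ∧ h 0 = 1 ∧ (∀ u : Λ, h u ≠ 0) ∧
        (∀ u : Λ, (u : M) ≠ 0 → 0 < (h u).order)) ↔
      ∃! p : (M →+ ℤ) × (Multiplicative M →* (PowerSeries k)ˣ),
        (∀ u : M, u ∈ Λ → u ≠ 0 → 0 < p.1 u) ∧
        ∀ u : Λ, h u = (PowerSeries.X : PowerSeries k) ^ (p.1 (u : M)).toNat *
          ((p.2 (Multiplicative.ofAdd (u : M)) : (PowerSeries k)ˣ) : PowerSeries k) := by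
  constructor
  · rintro ⟨hmul, -, hne, hpos⟩
    choose n w hnw using fun u => PowerSeries.exists_eq_X_pow_mul_unit (hne u)
    have hadd : ∀ u v, n (u + v) = n u + n v ∧ w (u + v) = w u * w v := by
      intro u v
      apply PowerSeries.X_pow_mul_unit_inj
      rw [← hnw, hmul, hnw u, hnw v, pow_add, Units.val_mul]
      ring
    obtain ⟨ν, hν⟩ := AddSubmonoid.exists_extend_of_closure_eq_top hΛ (fun u => (n u : ℤ))
      fun u v => by rw [(hadd u v).1, Nat.cast_add]
    obtain ⟨ω, hω⟩ := AddSubmonoid.exists_extend_of_closure_eq_top hΛ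
      (fun u => Additive.ofMul (w u)) fun u v => by rw [(hadd u v).2, ofMul_mul]
    have hnpos : ∀ u : Λ, (u : M) ≠ 0 → 0 < n u := by
      intro u hu
      have := hpos u hu
      rw [hnw, PowerSeries.order_X_pow_mul_unit] at this
      exact_mod_cast this
    refine ⟨(ν, AddMonoidHom.toMultiplicativeLeft ω), ⟨fun u hu hu0 => ?_, fun u => ?_⟩, ?_⟩
    · change 0 < ν u
      rw [hν ⟨u, hu⟩]
      exact_mod_cast hnpos ⟨u, hu⟩ hu0
    · change h u = PowerSeries.X ^ (ν u).toNat * (((ω u).toMul : (PowerSeries k)ˣ) : PowerSeries k)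
      rw [hν, hω, Int.toNat_natCast, toMul_ofMul, hnw]
    · rintro ⟨ν', ω'⟩ ⟨hpos', heq'⟩
      have hcoord : ∀ u : Λ, (ν' u).toNat = n u ∧ ω' (Multiplicative.ofAdd (u : M)) = w u :=
        fun u => PowerSeries.X_pow_mul_unit_inj ((heq' u).symm.trans (hnw u))
      refine Prod.ext ?_ ?_
      · refine AddMonoidHom.eq_of_eqOn_dense hΛ fun u hu => ?_
        have hnonneg : 0 ≤ ν' u := by
          by_cases hu0 : u = 0
          · simp [hu0]
          · exact (hpos' u hu hu0).le
        change ν' u = ν u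
        rw [hν ⟨u, hu⟩, ← (hcoord ⟨u, hu⟩).1, Int.toNat_of_nonneg hnonneg]
      · apply AddMonoidHom.toMultiplicativeLeft.symm.injective
        refine AddMonoidHom.eq_of_eqOn_dense hΛ fun u hu => ?_
        change Additive.ofMul (ω' (Multiplicative.ofAdd u)) = ω u
        rw [hω ⟨u, hu⟩, ← (hcoord ⟨u, hu⟩).2]
  · rintro ⟨⟨ν, ω⟩, ⟨hpos, heq⟩, -⟩
    have hnonneg : ∀ u : Λ, 0 ≤ ν u := by
      intro u
      by_cases hu0 : (u : M) = 0
      · simp [hu0]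
      · exact (hpos u u.2 hu0).le
    refine ⟨fun u v => ?_, ?_, fun u => ?_, fun u hu => ?_⟩
    · rw [heq, heq u, heq v, AddSubmonoid.coe_add, map_add,
        Int.toNat_add (hnonneg u) (hnonneg v), ofAdd_add, map_mul, Units.val_mul, pow_add]
      ring
    · simp [heq]
    · rw [heq]
      exact mul_ne_zero (pow_ne_zero _ PowerSeries.X_ne_zero) (Units.ne_zero _)
    · rw [heq, PowerSeries.order_X_pow_mul_unit]
      have := hpos u u.2 hu
      exact_mod_cast Int.pos_iff_toNat_pos.mp this
end

section
/- Fix j ∈ {1,…,n} and suppose ν, ν' ∈ ℝ^d satisfy ⟨ν,e_i⟩ > 0 and ⟨ν',e_i⟩ > 0 for all i, and for every r ∈ {1,…,j} an r-element subset S ⊆ {1,…,n} satisfies Σ_{i∈S}⟨ν,e_i⟩ = ord_{C_r}(ν) if and only if it satisfies Σ_{i∈S}⟨ν',e_i⟩ = ord_{C_r}(ν'). If (p'_1,…,p'_n) is a permutation of (1,…,n) with ⟨ν',e_{p'_1}⟩ ≤ ⟨ν',e_{p'_2}⟩ ≤ … ≤ ⟨ν',e_{p'_n}⟩, then ⟨ν,e_{p'_1}⟩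 ≤ ⟨ν,e_{p'_2}⟩ ≤ … ≤ ⟨ν,e_{p'_j}⟩, and Σ_{r=1}^{j'} ⟨ν, e_{p'_r}⟩ = ord_{C_{j'}}(ν) for every j' ∈ {1,…,j}. -/
/-- The support function is bounded above by the weight of every set of the right size. -/
lemma ordC_le {d n : ℕ} (e : Fin n → Fin d → ℝ) (ν : Fin d → ℝ) (S : Finset (Fin n)) :
    ordC e S.card ν ≤ ∑ i ∈ S, ∑ k, ν k * e i k := by
  refine csInf_le ?_ ⟨S, rfl, rfl⟩
  refine ((Set.finite_range fun T : Finset (Fin n) =>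
    ∑ i ∈ T, ∑ k, ν k * e i k).subset ?_).bddBelow
  rintro x ⟨T, -, rfl⟩
  exact ⟨T, rfl⟩

/-- A set of minimal weight among the sets of its size computes the support function. -/
lemma sum_eq_ordC {d n : ℕ} (e : Fin n → Fin d → ℝ) (ν : Fin d → ℝ) (S : Finset (Fin n))
    (hS : ∀ T : Finset (Fin n), T.card = S.card →
      ∑ i ∈ S, ∑ k, ν k * e i k ≤ ∑ i ∈ T, ∑ k, ν k * e i k) :
    ∑ i ∈ S, ∑ k, ν k * e i k = ordC e S.card ν := by
  symm
  refine IsLeast.csInf_eq ⟨⟨S, rfl, rfl⟩, ?_⟩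
  rintro x ⟨T, hT, rfl⟩
  exact hS T hT

lemma card_filter_val_lt {n r : ℕ} (hr : r ≤ n) :
    (Finset.univ.filter fun i : Fin n => (i : ℕ) < r).card = r := by
  simp [Fin.card_filter_val_lt, hr]

/-- An initial segment minimizes the sum of a monotone function among sets of its size. -/
lemma Monotone.sum_initial_le {n r : ℕ} {f : Fin n → ℝ} (hf : Monotone f) (hr1 : 1 ≤ r)
    (hr : r ≤ n) (S : Finset (Fin n)) (hS : S.card = r) :
    ∑ i ∈ Finset.univ.filter (fun i : Fin n => (i : ℕ) < r), f i ≤ ∑ i ∈ S, f i := by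
  set P := Finset.univ.filter (fun i : Fin n => (i : ℕ) < r) with hP
  let c : Fin n := ⟨r - 1, by omega⟩
  have hcard : (P \ S).card = (S \ P).card :=
    Finset.card_sdiff_comm ((card_filter_val_lt hr).trans hS.symm)
  have h₁ : ∑ i ∈ P \ S, f i ≤ (P \ S).card • f c := by
    refine Finset.sum_le_card_nsmul _ _ _ fun i hi => hf ?_
    simp only [hP, Finset.mem_sdiff, Finset.mem_filter_univ] at hi
    simp only [c, Fin.le_def]
    omega
  have h₂ : (S \ P).card • f c ≤ ∑ i ∈ S \ P, f i := by
    refine Finset.card_nsmul_le_sum _ _ _ fun i hi => hf ?_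
    simp only [hP, Finset.mem_sdiff, Finset.mem_filter_univ] at hi
    simp only [c, Fin.le_def]
    omega
  have h₃ := Finset.sum_sdiff_sub_sum_sdiff (s₁ := S) (s₂ := P) (f := f)
  rw [hcard] at h₁
  linarith

theorem stmt6 (d n : ℕ) (e : Fin n → Fin d → ℝ)
    (j : ℕ) (hj1 : 1 ≤ j) (hjn : j ≤ n)
    (ν ν' : Fin d → ℝ)
    (ha : ∀ i, 0 < ∑ k, ν k * e i k) (ha' : ∀ i, 0 < ∑ k, ν' k * e i k)
    (hb : ∀ r : ℕ, 1 ≤ r → r ≤ j → ∀ S : Finset (Fin n), S.card = r →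
      ((∑ i ∈ S, ∑ k, ν k * e i k) = ordC e r ν ↔
        (∑ i ∈ S, ∑ k, ν' k * e i k) = ordC e r ν'))
    (p' : Equiv.Perm (Fin n))
    (hp' : ∀ a b : Fin n, a ≤ b → ∑ k, ν' k * e (p' a) k ≤ ∑ k, ν' k * e (p' b) k) :
    (∀ a b : Fin n, a ≤ b → (b : ℕ) < j →
      ∑ k, ν k * e (p' a) k ≤ ∑ k, ν k * e (p' b) k) ∧
    (∀ j' : ℕ, 1 ≤ j' → j' ≤ j →
      (∑ r ∈ Finset.univ.filter (fun r : Fin n => (r : ℕ) < j'), ∑ k, ν k * e (p' r) k) =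
        ordC e j' ν) := by
  have hinit : ∀ r : ℕ, 1 ≤ r → r ≤ j →
      (∑ i ∈ Finset.univ.filter (fun i : Fin n => (i : ℕ) < r), ∑ k, ν k * e (p' i) k) =
        ordC e r ν := by
    intro r hr1 hrj
    set P := (Finset.univ.filter fun i : Fin n => (i : ℕ) < r).map p'.toEmbedding with hP
    have hcard : P.card = r := by
      rw [hP, Finset.card_map, card_filter_val_lt (hrj.trans hjn)]
    have hmin : ∑ i ∈ P, ∑ k, ν' k * e i k = ordC e r ν' := by
      rw [← hcard]
      refine sum_eq_ordC e ν' P fun T hT => ?_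
      have h := Monotone.sum_initial_le (f := fun i => ∑ k, ν' k * e (p' i) k)
        (fun a b hab => hp' a b hab) hr1 (hrj.trans hjn) (T.map p'.symm.toEmbedding)
        (by rw [Finset.card_map, hT, hcard])
      simpa [hP, Finset.sum_map] using h
    have h := (hb r hr1 hrj P hcard).2 hmin
    simpa [hP, Finset.sum_map] using h
  refine ⟨fun a b hab hbj => ?_, hinit⟩
  -- Exchange the images of a and b in the minimal set given by the first a + 1 indices.
  set A := Finset.univ.filter (fun i : Fin n => (i : ℕ) < a) with hA
  have hab' : (a : ℕ) ≤ b := hab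
  have haA : a ∉ A := by simp [hA]
  have hbA : b ∉ A := by simpa [hA] using hab
  have hsucc : Finset.univ.filter (fun i : Fin n => (i : ℕ) < a + 1) = insert a A := by
    ext i
    simp only [hA, Finset.mem_filter_univ, Finset.mem_insert, Fin.ext_iff]
    omega
  have h₁ := hinit (a + 1) (by omega) (by omega)
  have h₂ := ordC_le e ν ((insert b A).map p'.toEmbedding)
  rw [Finset.card_map, Finset.card_insert_of_notMem hbA, hA,
    card_filter_val_lt a.isLt.le, ← hA, ← h₁, hsucc, Finset.sum_map,
    Finset.sum_insert haA, Finset.sum_insert hbA] at h₂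
  simpa using h₂
end

section
/- Fix j ∈ {1,…,n} and suppose (ν,s) ∈ ℝ^d × ℝ satisfies ⟨ν,e_i⟩ > 0 for all i, φ_j(ν) ≤ s, and s < φ_{j+1}(ν) in case j < n. Suppose ν' ∈ ℝ^d satisfies ⟨ν',e_i⟩ > 0 for all i, the ℝ-span of {e_i : ⟨ν',e_i⟩ ≤ s} equals the ℝ-span ℓ of {e_i : ⟨ν,e_i⟩ ≤ s}, and ⟨ν,x⟩ = ⟨ν',x⟩ for every x ∈ ℓ. Then: (1) for every r ∈ {1,…,j}, an r-element subset S ⊆ {1,…,n} satisfies Σ_{i∈S}⟨ν',e_i⟩ = ord_{C_r}(ν') if and only if it satisfies Σ_{i∈S}⟨ν,e_i⟩ = ord_{C_r}(ν) (ν' defines the same faces of the Newton polyhedra of C_1,…,C_j as ν); and (2) φ_j(ν') ≤ s, with s < φ_{j+1}(ν') in case j < n. (Hence each set A(φ,j,θ) is a union of equivalence classes of the relation (ν,s) ∼ (ν',s') ⇔ s = s', ℓ_ν^s = ℓ_{ν'}^s and ν, ν' agree on this span.) -/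
/-- `φ_j := ord_{C_j} − ord_{C_{j−1}}` (with `ord_{C_0} = 0`). -/
noncomputable def phiC {d n : ℕ} (e : Fin n → Fin d → ℝ) (j : ℕ) (ν : Fin d → ℝ) : ℝ :=
  ordC e j ν - ordC e (j - 1) ν

section OrdC

variable {d n : ℕ} {e : Fin n → Fin d → ℝ} {ν ν' : Fin d → ℝ} {s : ℝ}

theorem finite_setOf_sum_of_card (e : Fin n → Fin d → ℝ) (r : ℕ) (ν : Fin d → ℝ) :
    {x : ℝ | ∃ S : Finset (Fin n), S.card = r ∧ x = ∑ i ∈ S, ∑ k, ν k * e i k}.Finite := by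
  refine (Set.finite_range fun S : Finset (Fin n) => ∑ i ∈ S, ∑ k, ν k * e i k).subset ?_
  rintro x ⟨S, -, rfl⟩
  exact ⟨S, rfl⟩

theorem ordC_le_sum (S : Finset (Fin n)) :
    ordC e S.card ν ≤ ∑ i ∈ S, ∑ k, ν k * e i k :=
  csInf_le (finite_setOf_sum_of_card e S.card ν).bddBelow ⟨S, rfl, rfl⟩

theorem exists_sum_eq_ordC (e : Fin n → Fin d → ℝ) (ν : Fin d → ℝ) {r : ℕ} (hr : r ≤ n) :
    ∃ S : Finset (Fin n), S.card = r ∧ ∑ i ∈ S, ∑ k, ν k * e i k = ordC e r ν := by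
  obtain ⟨S₀, -, hS₀⟩ := Finset.exists_subset_card_eq
    (s := (Finset.univ : Finset (Fin n))) (n := r) (by simpa using hr)
  have hne : {x : ℝ | ∃ S : Finset (Fin n),
      S.card = r ∧ x = ∑ i ∈ S, ∑ k, ν k * e i k}.Nonempty := ⟨_, S₀, hS₀, rfl⟩
  obtain ⟨S, hS, hsum⟩ := hne.csInf_mem (finite_setOf_sum_of_card e r ν)
  exact ⟨S, hS, hsum.symm⟩

/-- The indices `i` with `⟨ν, e i⟩ ≤ s`. -/
noncomputable def sublevel (e : Fin n → Fin d → ℝ) (ν : Fin d → ℝ) (s : ℝ) : Finset (Fin n) :=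
  {i | ∑ k, ν k * e i k ≤ s}

theorem mem_sublevel {i : Fin n} : i ∈ sublevel e ν s ↔ ∑ k, ν k * e i k ≤ s := by
  simp [sublevel]

theorem phiC_le_of_le_card_sublevel {j : ℕ} (hj : 1 ≤ j) (h : j ≤ (sublevel e ν s).card) :
    phiC e j ν ≤ s := by
  have hn : (sublevel e ν s).card ≤ n := by simpa using Finset.card_le_univ (sublevel e ν s)
  obtain ⟨S, hS, hsum⟩ := exists_sum_eq_ordC e ν (r := j - 1) (by omega)
  obtain ⟨i, hiT, hiS⟩ := Finset.exists_mem_notMem_of_card_lt_card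
    (show S.card < (sublevel e ν s).card by omega)
  have hle := ordC_le_sum (e := e) (ν := ν) (insert i S)
  rw [Finset.card_insert_of_notMem hiS, Finset.sum_insert hiS, hsum, hS,
    Nat.sub_add_cancel hj] at hle
  rw [mem_sublevel] at hiT
  unfold phiC
  linarith

theorem lt_phiC_of_card_sublevel_lt {j : ℕ} (hj : j ≤ n) (h : (sublevel e ν s).card < j) :
    s < phiC e j ν := by
  obtain ⟨S, hS, hsum⟩ := exists_sum_eq_ordC e ν hj
  obtain ⟨i, hiS, hiT⟩ := Finset.exists_mem_notMem_of_card_lt_card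
    (show (sublevel e ν s).card < S.card by omega)
  have hle := ordC_le_sum (e := e) (ν := ν) (S.erase i)
  rw [Finset.card_erase_of_mem hiS, hS] at hle
  have hadd := Finset.add_sum_erase S (fun i => ∑ k, ν k * e i k) hiS
  rw [mem_sublevel, not_le] at hiT
  unfold phiC
  linarith

theorem phiC_le_iff {j : ℕ} (hj : 1 ≤ j) (hjn : j ≤ n) :
    phiC e j ν ≤ s ↔ j ≤ (sublevel e ν s).card :=
  ⟨fun h => not_lt.1 fun hlt => (lt_phiC_of_card_sublevel_lt hjn hlt).not_ge h,
    phiC_le_of_le_card_sublevel hj⟩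

/-- A minimizing set with at most as many elements as the sublevel set lies inside it. -/
theorem subset_sublevel_of_sum_eq_ordC {S : Finset (Fin n)}
    (hcard : S.card ≤ (sublevel e ν s).card)
    (hS : ∑ i ∈ S, ∑ k, ν k * e i k = ordC e S.card ν) : S ⊆ sublevel e ν s := by
  intro i hiS
  by_contra hiT
  have hlt : (S.erase i).card < (sublevel e ν s).card :=
    (Finset.card_erase_lt_of_mem hiS).trans_le hcard
  obtain ⟨t, htT, htS⟩ := Finset.exists_mem_notMem_of_card_lt_card hlt
  have hle := ordC_le_sum (e := e) (ν := ν) (insert t (S.erase i))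
  rw [Finset.card_insert_of_notMem htS, Finset.card_erase_add_one hiS,
    Finset.sum_insert htS, ← hS] at hle
  have hadd := Finset.add_sum_erase S (fun i => ∑ k, ν k * e i k) hiS
  rw [mem_sublevel] at htT hiT
  linarith

/-- If `ν` and `ν'` have the same sublevel set and agree on it, every small minimizing set for
`ν` is one for `ν'`. -/
theorem sum_eq_ordC_of_sublevel_eq (hT : sublevel e ν' s = sublevel e ν s)
    (hagree : ∀ i ∈ sublevel e ν s, ∑ k, ν k * e i k = ∑ k, ν' k * e i k)
    {S : Finset (Fin n)} (hcard : S.card ≤ (sublevel e ν s).card)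
    (hS : ∑ i ∈ S, ∑ k, ν k * e i k = ordC e S.card ν) :
    ∑ i ∈ S, ∑ k, ν' k * e i k = ordC e S.card ν' := by
  obtain ⟨S', hS', hsum'⟩ := exists_sum_eq_ordC e ν' (r := S.card)
    (by simpa using Finset.card_le_univ S)
  have hsub := subset_sublevel_of_sum_eq_ordC hcard hS
  have hsub' : S' ⊆ sublevel e ν s := by
    rw [← hT] at hcard ⊢
    exact subset_sublevel_of_sum_eq_ordC (by omega) (by rw [hsum', hS'])
  have heq := Finset.sum_congr rfl fun i hi => hagree i (hsub hi)
  have heq' := Finset.sum_congr rfl fun i hi => hagree i (hsub' hi)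
  have hle' := ordC_le_sum (e := e) (ν := ν) S'
  rw [hS'] at hle'
  exact le_antisymm (by linarith) (ordC_le_sum S)

end OrdC

theorem stmt8 (d n : ℕ) (e : Fin n → Fin d → ℝ)
    (j : ℕ) (hj1 : 1 ≤ j) (hjn : j ≤ n)
    (ν ν' : Fin d → ℝ) (s : ℝ)
    (ha : ∀ i, 0 < ∑ k, ν k * e i k)
    (hs1 : phiC e j ν ≤ s) (hs2 : j < n → s < phiC e (j + 1) ν)
    (ha' : ∀ i, 0 < ∑ k, ν' k * e i k)
    (hspan : Submodule.span ℝ {x : Fin d → ℝ | ∃ i, (∑ k, ν' k * e i k) ≤ s ∧ x = e i} =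
      Submodule.span ℝ {x : Fin d → ℝ | ∃ i, (∑ k, ν k * e i k) ≤ s ∧ x = e i})
    (hagree : ∀ x ∈ Submodule.span ℝ {x : Fin d → ℝ | ∃ i, (∑ k, ν k * e i k) ≤ s ∧ x = e i},
      ∑ k, ν k * x k = ∑ k, ν' k * x k) :
    (∀ r : ℕ, 1 ≤ r → r ≤ j → ∀ S : Finset (Fin n), S.card = r →
      ((∑ i ∈ S, ∑ k, ν' k * e i k) = ordC e r ν' ↔
        (∑ i ∈ S, ∑ k, ν k * e i k) = ordC e r ν)) ∧
    phiC e j ν' ≤ s ∧ (j < n → s < phiC e (j + 1) ν') := by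
  have hmem : ∀ i, ∑ k, ν k * e i k ≤ s → ∑ k, ν k * e i k = ∑ k, ν' k * e i k :=
    fun i hi => hagree _ (Submodule.subset_span ⟨i, hi, rfl⟩)
  have hmem' : ∀ i, ∑ k, ν' k * e i k ≤ s → ∑ k, ν k * e i k = ∑ k, ν' k * e i k :=
    fun i hi => hagree _ (hspan ▸ Submodule.subset_span ⟨i, hi, rfl⟩)
  have hT : sublevel e ν' s = sublevel e ν s := by
    ext i
    rw [mem_sublevel, mem_sublevel]
    exact ⟨fun h => (hmem' i h).trans_le h, fun h => (hmem i h).symm.trans_le h⟩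
  have hcard : j ≤ (sublevel e ν s).card := (phiC_le_iff hj1 hjn).1 hs1
  refine ⟨?_, (phiC_le_iff hj1 hjn).2 (hT ▸ hcard), fun hlt => ?_⟩
  · rintro r - hrj S rfl
    exact ⟨sum_eq_ordC_of_sublevel_eq hT.symm
        (fun i hi => (hmem' i (mem_sublevel.1 hi)).symm) (hT ▸ hrj.trans hcard),
      sum_eq_ordC_of_sublevel_eq hT (fun i hi => hmem i (mem_sublevel.1 hi))
        (hrj.trans hcard)⟩
  · have h := hs2 hlt
    rw [← not_le, phiC_le_iff (by omega) hlt] at h ⊢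
    rwa [hT]
end
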